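/- Let d be an odd positive integer and let 𝒟 = {D₁, D₂} be nontrivial partitions of d (neither equal to [d] nor to [1,…,1]) with ν(D₁) + ν(D₂) = d − 1, ν(D₁) ≥ ν(D₂), and D₁ ≠ [2,…,2,1]. Suppose D₁ has at least one part equal to 1. Then D₁ contains a part x > 2, and there exist permutations α ∈ D₁ and β ∈ D₂ of the d-element set such that the cycle type of αβ is [d−2, 1, 1]; moreover there exists a permutation ω with ω² = αβ such that the group ⟨α, β, ω⟩ is transitive. -/

import Mathlib

/-- The cycle type of a permutation, including fixed points as parts equal to `1`. -/
def fullCycleType {Ω : Type*} [Fintype Ω] [DecidableEq Ω] (σ : Equiv.Perm Ω) : Multiset ℕ :=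
  σ.cycleType + Multiset.replicate (Fintype.card Ω - σ.support.card) 1

/-- A multiset of positive integers summing to `d`, i.e. a partition of `d`. -/
def IsPartitionOf (d : ℕ) (D : Multiset ℕ) : Prop :=
  (∀ x ∈ D, 0 < x) ∧ D.sum = d

/-- The defect `ν(D) = Σⱼ (dⱼ − 1)` of a partition. -/
def nu (D : Multiset ℕ) : ℕ := (D.map (· - 1)).sum

/-- The partition `[2,…,2,1]` of an odd number `d`, with `(d−1)/2` parts equal to `2`. -/
def twosAndOne (d : ℕ) : Multiset ℕ := Multiset.replicate ((d - 1) / 2) 2 + {1}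

/-- A subgroup of the symmetric group on `Ω` is transitive. -/
def SubgroupTransitive {Ω : Type*} (G : Subgroup (Equiv.Perm Ω)) : Prop :=
  ∀ x y : Ω, ∃ g ∈ G, g x = y

/-- `Λ` is a block for the subgroup `G` of the symmetric group on `Ω`. -/
def IsBlockOf {Ω : Type*} (G : Subgroup (Equiv.Perm Ω)) (Λ : Set Ω) : Prop :=
  Λ.Nonempty ∧ ∀ g ∈ G, (⇑g '' Λ = Λ ∨ Disjoint (⇑g '' Λ) Λ)

/-- A block is trivial if it is a singleton or the whole set. -/
def TrivialBlock {Ω : Type*} (Λ : Set Ω) : Prop :=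
  (∃ x, Λ = {x}) ∨ Λ = Set.univ

/-- A subgroup of the symmetric group is primitive: transitive with only trivial blocks. -/
def SubgroupPrimitive {Ω : Type*} (G : Subgroup (Equiv.Perm Ω)) : Prop :=
  SubgroupTransitive G ∧ ∀ Λ : Set Ω, IsBlockOf G Λ → TrivialBlock Λ

/-- A subgroup of the symmetric group is imprimitive: transitive but not primitive. -/
def SubgroupImprimitive {Ω : Type*} (G : Subgroup (Equiv.Perm Ω)) : Prop :=
  SubgroupTransitive G ∧ ¬ SubgroupPrimitive G

/-- The orbit of `x` under a subgroup `G` of the symmetric group on `Ω`. -/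
def orbSet {Ω : Type*} (G : Subgroup (Equiv.Perm Ω)) (x : Ω) : Set Ω :=
  {y | ∃ g ∈ G, g x = y}

/-- The number of orbits of a subgroup `G` of the symmetric group on `Ω`. -/
noncomputable def numOrbits {Ω : Type*} (G : Subgroup (Equiv.Perm Ω)) : ℕ :=
  Nat.card (Set.range (orbSet G))

/-!
A bicoloured plane tree with `m` edges is a pair of permutations `α`, `β` of its edges whose
product runs once around the tree, the cycles of `α` and `β` being the black and the white
vertices. Every pair of partitions of `m` with `m + 1` parts in total comes from such a tree, and
one can prescribe that some black vertex of degree `a` is joined to some white vertex of degree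
`b`, unless both are leaves and `m > 1`: grow the tree leaf by leaf.

Remove a part `1` from each of `D₁`, `D₂` and lower a part `a + 1 > 2` of `D₁` and a part
`b + 1 > 1` of `D₂` by one. Take a tree with `m = d - 2` edges realizing the outcome, with an edge
`x` joining the lowered vertices, and two further points `y`, `z`. Then
`α (y x) · (y x) β = α β` has cycle type `[m, 1, 1]`, while both factors have regained the
lost parts. As `m` is odd, the `m`-cycle `α β` has a square root, which may be multiplied by `(y z)`
and then connects `z` to all other points.
-/

open Equiv Equiv.Perm

theorem nu_add_card {D : Multiset ℕ} (hD : ∀ x ∈ D, 0 < x) : nu D + D.card = D.sum := by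
  induction D using Multiset.induction_on with
  | empty => simp [nu]
  | cons a s ih =>
    have ha : 0 < a := hD a (Multiset.mem_cons_self a s)
    have hs : nu s + s.card = s.sum := ih fun x hx => hD x (Multiset.mem_cons_of_mem hx)
    simp only [nu, Multiset.map_cons, Multiset.sum_cons, Multiset.card_cons] at hs ⊢
    omega

theorem eq_replicate_of_card_nsmul_le_sum {M : Type*} [AddCommMonoid M] [PartialOrder M]
    [IsOrderedCancelAddMonoid M] {s : Multiset M} {a : M} (hle : ∀ x ∈ s, x ≤ a)
    (hsum : s.card • a ≤ s.sum) : s = Multiset.replicate s.card a := by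
  refine Multiset.eq_replicate_card.2 fun x hx => (hle x hx).antisymm ?_
  obtain ⟨t, rfl⟩ := Multiset.exists_cons_of_mem hx
  have ht : t.sum ≤ t.card • a :=
    t.sum_le_card_nsmul a fun y hy => hle y (Multiset.mem_cons_of_mem hy)
  rw [Multiset.card_cons, Multiset.sum_cons, succ_nsmul'] at hsum
  exact le_of_add_le_add_right (hsum.trans (add_le_add_right ht x))

theorem exists_eq_cons_cons {ι : Type*} {s : Multiset ι} {x y : ι} (hx : x ∈ s) (hy : y ∈ s)
    (hxy : y ≠ x) : ∃ t, s = x ::ₘ y ::ₘ t := by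
  obtain ⟨u, rfl⟩ := Multiset.exists_cons_of_mem hx
  obtain ⟨t, rfl⟩ := Multiset.exists_cons_of_mem ((Multiset.mem_cons.1 hy).resolve_left hxy)
  exact ⟨t, rfl⟩

namespace IsPartitionOf

variable {d : ℕ} {D : Multiset ℕ}

theorem nu_add_card (hD : IsPartitionOf d D) : nu D + D.card = d :=
  (_root_.nu_add_card hD.1).trans hD.2

theorem one_mem (hD : IsPartitionOf d D) (hcard : d < 2 * D.card) : 1 ∈ D := by
  by_contra h1
  have htwo : ∀ x ∈ D, 2 ≤ x := fun x hx =>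
    lt_of_le_of_ne (hD.1 x hx) (ne_of_mem_of_not_mem hx h1).symm
  have hle : D.card • 2 ≤ D.sum := Multiset.card_nsmul_le_sum htwo
  rw [hD.2, smul_eq_mul] at hle
  omega

theorem exists_one_lt (hD : IsPartitionOf d D) (hne : D ≠ Multiset.replicate d 1) :
    ∃ x ∈ D, 1 < x := by
  by_contra! hle
  have hones : D = Multiset.replicate D.card 1 :=
    Multiset.eq_replicate_card.2 fun x hx => (hle x hx).antisymm (hD.1 x hx)
  have hcard : D.card = d := by
    rw [← hD.2, hones]
    simp
  exact hne (hcard ▸ hones)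

theorem exists_two_lt (hD : IsPartitionOf d D) (h1 : 1 ∈ D) (hcard : 2 * D.card ≤ d + 1)
    (hne : D ≠ twosAndOne d) : ∃ x ∈ D, 2 < x := by
  by_contra! hle
  obtain ⟨E, rfl⟩ := Multiset.exists_cons_of_mem h1
  have hsum := hD.2
  simp only [Multiset.sum_cons, Multiset.card_cons] at hsum hcard
  have htwos : E = Multiset.replicate E.card 2 :=
    eq_replicate_of_card_nsmul_le_sum (fun x hx => hle x (Multiset.mem_cons_of_mem hx))
      (by rw [smul_eq_mul]; omega)
  have hEsum : E.sum = E.card * 2 := by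
    conv_lhs => rw [htwos]
    simp
  have hEcard : (d - 1) / 2 = E.card := by omega
  exact hne (by rw [twosAndOne, hEcard, ← htwos, add_comm, Multiset.singleton_add])

theorem one_cons_iff : IsPartitionOf (d + 1) (1 ::ₘ D) ↔ IsPartitionOf d D := by
  simp only [IsPartitionOf, Multiset.mem_cons, forall_eq_or_imp, Multiset.sum_cons]
  grind

theorem succ_cons_iff {a : ℕ} (ha : 0 < a) :
    IsPartitionOf (d + 1) ((a + 1) ::ₘ D) ↔ IsPartitionOf d (a ::ₘ D) := by
  simp only [IsPartitionOf, Multiset.mem_cons, forall_eq_or_imp, Multiset.sum_cons]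
  grind

end IsPartitionOf

section CycleType

variable {Ω : Type*} [DecidableEq Ω]

theorem exists_perm_cons_formPerm_eq_swap_mul {l : List Ω} {x : Ω} (hl : l.Nodup) (hx : x ∈ l)
    (y : Ω) : ∃ l' : List Ω, l'.Perm (y :: l) ∧ l'.formPerm = swap y x * l.formPerm := by
  obtain ⟨s, t, rfl⟩ := List.append_of_mem hx
  have hrot : s ++ x :: t ~r x :: (t ++ s) := List.isRotated_append
  refine ⟨y :: x :: (t ++ s), hrot.perm.symm.cons y, ?_⟩
  rw [List.formPerm_cons_cons, List.formPerm_eq_of_isRotated hl hrot]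

theorem disjoint_formPerm_of_forall_mem {l : List Ω} {τ : Perm Ω} (h : ∀ z ∈ l, τ z = z) :
    Disjoint l.formPerm τ := fun z => by
  by_cases hz : z ∈ l
  · exact Or.inr (h z hz)
  · exact Or.inl (List.formPerm_apply_of_notMem hz)

variable [Fintype Ω]

theorem cycleType_formPerm_eq_filter {l : List Ω} (hl : l.Nodup) :
    l.formPerm.cycleType = ({l.length} : Multiset ℕ).filter (2 ≤ ·) := by
  by_cases hlen : 2 ≤ l.length
  · have hne : ∀ x, l ≠ [x] := by
      rintro x rfl
      simp at hlen
    rw [(List.isCycle_formPerm hl hlen).cycleType, List.support_formPerm_of_nodup l hl hne,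
      List.toFinset_card_of_nodup hl, Multiset.filter_singleton, if_pos hlen]
  · rw [(List.formPerm_eq_one_iff l hl).2 (by omega), cycleType_one, Multiset.filter_singleton,
      if_neg hlen]
    rfl

theorem fullCycleType_eq_of_cycleType_eq_filter {σ : Perm Ω} {D : Multiset ℕ}
    (hD : IsPartitionOf (Fintype.card Ω) D) (hσ : σ.cycleType = D.filter (2 ≤ ·)) :
    fullCycleType σ = D := by
  have hones : D.filter (¬ 2 ≤ ·) = Multiset.replicate (D.filter (¬ 2 ≤ ·)).card 1 :=
    Multiset.eq_replicate_card.2 fun x hx => by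
      have hpos := hD.1 x (Multiset.mem_of_mem_filter hx)
      have hlt := Multiset.of_mem_filter hx
      omega
  have hsplit : D.filter (2 ≤ ·) + D.filter (¬ 2 ≤ ·) = D := Multiset.filter_add_not _ D
  have hcard : Fintype.card Ω - σ.support.card = (D.filter (¬ 2 ≤ ·)).card := by
    have hsum : (D.filter (¬ 2 ≤ ·)).sum = (D.filter (¬ 2 ≤ ·)).card := by
      conv_lhs => rw [hones]
      simp
    rw [← hD.2, ← sum_cycleType, hσ, ← hsum]
    exact tsub_eq_of_eq_add_rev (by rw [← Multiset.sum_add, hsplit])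
  rw [fullCycleType, hσ, hcard, ← hones, hsplit]

/-- The cycle of `σ` through `x` has length `k`, and the other cycles of `σ` have the lengths `R`.
Parts of `R` below `2` are ignored, so that `σ` may fix any number of further points; `k = 1` means
that `x` is a fixed point. The cycle is given as a list since `List.formPerm` treats `k = 1`
uniformly with `k > 1`. -/
def HasCycleTypeAt (σ : Perm Ω) (x : Ω) (k : ℕ) (R : Multiset ℕ) : Prop :=
  ∃ (l : List Ω) (τ : Perm Ω), l.Nodup ∧ x ∈ l ∧ l.length = k ∧ (∀ z ∈ l, τ z = z) ∧
    σ = l.formPerm * τ ∧ τ.cycleType = R.filter (2 ≤ ·)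

namespace HasCycleTypeAt

variable {σ : Perm Ω} {x y : Ω} {k : ℕ} {R : Multiset ℕ}

theorem of_apply_eq_self (hx : σ x = x) (hσ : σ.cycleType = R.filter (2 ≤ ·)) :
    HasCycleTypeAt σ x 1 R :=
  ⟨[x], σ, by simp, by simp, by simp, by simpa, by simp, hσ⟩

theorem cycleType (h : HasCycleTypeAt σ x k R) : σ.cycleType = (k ::ₘ R).filter (2 ≤ ·) := by
  obtain ⟨l, τ, hl, -, rfl, hτ, rfl, hR⟩ := h
  rw [(disjoint_formPerm_of_forall_mem hτ).cycleType_mul, cycleType_formPerm_eq_filter hl, hR,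
    ← Multiset.filter_add, Multiset.singleton_add]

theorem one_cons (h : HasCycleTypeAt σ x k R) : HasCycleTypeAt σ x k (1 ::ₘ R) := by
  simpa only [HasCycleTypeAt, Multiset.filter_cons_of_neg R (show ¬ 2 ≤ 1 by decide)] using h

theorem inv (h : HasCycleTypeAt σ x k R) : HasCycleTypeAt σ⁻¹ x k R := by
  obtain ⟨l, τ, hl, hx, rfl, hτ, rfl, hR⟩ := h
  refine ⟨l.reverse, τ⁻¹, List.nodup_reverse.2 hl, List.mem_reverse.2 hx, List.length_reverse,
    fun z hz => ?_, ?_, by rw [cycleType_inv, hR]⟩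
  · rw [Perm.inv_eq_iff_eq, hτ z (List.mem_reverse.1 hz)]
  · rw [List.formPerm_reverse, (disjoint_formPerm_of_forall_mem hτ).commute.eq, mul_inv_rev]

theorem map_apply (h : HasCycleTypeAt σ x k R) : HasCycleTypeAt σ (σ x) k R := by
  obtain ⟨l, τ, hl, hx, hlen, hτ, rfl, hR⟩ := h
  refine ⟨l, τ, hl, ?_, hlen, hτ, rfl, hR⟩
  rw [Perm.mul_apply, hτ x hx]
  exact List.formPerm_apply_mem_of_mem hx

theorem swap_mul (h : HasCycleTypeAt σ x k R) (hy : σ y = y) (hxy : x ≠ y) :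
    HasCycleTypeAt (swap y x * σ) y (k + 1) R := by
  obtain ⟨l, τ, hl, hx, rfl, hτ, rfl, hR⟩ := h
  have hyl : y ∉ l := fun hyl => by
    rw [Perm.mul_apply, hτ y hyl, List.formPerm_apply_mem_eq_self_iff l hl y hyl] at hy
    obtain ⟨w, rfl⟩ := List.length_eq_one_iff.1 (hy.antisymm (List.length_pos_of_mem hx))
    exact hxy ((List.mem_singleton.1 hx).trans (List.mem_singleton.1 hyl).symm)
  have hτy : τ y = y := by
    apply l.formPerm.injective
    rw [List.formPerm_apply_of_notMem hyl]
    exact hy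
  obtain ⟨l', hperm, hl'⟩ := exists_perm_cons_formPerm_eq_swap_mul hl hx y
  refine ⟨l', τ, hperm.nodup_iff.2 (List.nodup_cons.2 ⟨hyl, hl⟩),
    hperm.mem_iff.2 List.mem_cons_self, hperm.length_eq, fun z hz => ?_, ?_, hR⟩
  · rcases List.mem_cons.1 (hperm.mem_iff.1 hz) with rfl | hz
    exacts [hτy, hτ z hz]
  · rw [hl', mul_assoc]

theorem mul_swap (h : HasCycleTypeAt σ x k R) (hy : σ y = y) (hxy : x ≠ y) :
    HasCycleTypeAt (σ * swap y x) y (k + 1) R := by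
  have hinv : HasCycleTypeAt (swap y x * σ⁻¹)⁻¹ y (k + 1) R :=
    (h.inv.swap_mul (Perm.inv_eq_iff_eq.2 hy.symm) hxy).inv
  rwa [mul_inv_rev, inv_inv, swap_inv] at hinv

end HasCycleTypeAt

end CycleType

section PlaneTree

variable {Ω : Type*} [Fintype Ω] [DecidableEq Ω]

/-- A bicoloured plane tree whose edges are the entries of `l`. The black and the white vertices
are the cycles of `α` and `β`, their degrees are the cycle lengths, and `l` is the order in which
`α * β` visits the edges. The edge `x` joins a black vertex of degree `a` to a white vertex of
degree `b`, and `A`, `B` are the degrees of the other vertices; leaves in `A` and `B` are not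
recorded, as in `HasCycleTypeAt`. -/
structure IsPlaneTree (α β : Perm Ω) (l : List Ω) (x : Ω) (a : ℕ) (A : Multiset ℕ) (b : ℕ)
    (B : Multiset ℕ) : Prop where
  nodup : l.Nodup
  mem : x ∈ l
  mul_eq : α * β = l.formPerm
  left_apply : ∀ y ∉ l, α y = y
  right_apply : ∀ y ∉ l, β y = y
  left_at : HasCycleTypeAt α x a A
  right_at : HasCycleTypeAt β x b B

namespace IsPlaneTree

variable {α β : Perm Ω} {l : List Ω} {x y : Ω} {a b : ℕ} {A B : Multiset ℕ}

theorem singleton (x : Ω) : IsPlaneTree 1 1 [x] x 1 0 1 0 where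
  nodup := List.nodup_singleton x
  mem := List.mem_singleton_self x
  mul_eq := by simp
  left_apply _ _ := rfl
  right_apply _ _ := rfl
  left_at := .of_apply_eq_self rfl (by simp)
  right_at := .of_apply_eq_self rfl (by simp)

theorem symm (h : IsPlaneTree α β l x a A b B) : IsPlaneTree β⁻¹ α⁻¹ l.reverse x b B a A where
  nodup := List.nodup_reverse.2 h.nodup
  mem := List.mem_reverse.2 h.mem
  mul_eq := by rw [List.formPerm_reverse, ← h.mul_eq, mul_inv_rev]
  left_apply y hy :=
    Perm.inv_eq_iff_eq.2 (h.right_apply y fun hyl => hy (List.mem_reverse.2 hyl)).symm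
  right_apply y hy :=
    Perm.inv_eq_iff_eq.2 (h.left_apply y fun hyl => hy (List.mem_reverse.2 hyl)).symm
  left_at := h.right_at.inv
  right_at := h.left_at.inv

theorem ne_of_notMem (h : IsPlaneTree α β l x a A b B) (hy : y ∉ l) : x ≠ y :=
  fun hxy => hy (hxy ▸ h.mem)

-- The new edge `y` hangs a white leaf on the black vertex of `x`.
theorem exists_attach_leaf (h : IsPlaneTree α β l x a A b B) (hy : y ∉ l) :
    ∃ l' : List Ω, l'.length = l.length + 1 ∧
      IsPlaneTree (swap y x * α) β l' x (a + 1) A b (1 ::ₘ B) ∧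
      IsPlaneTree (swap y x * α) β l' y (a + 1) A 1 (b ::ₘ B) := by
  obtain ⟨l', hperm, hl'⟩ := exists_perm_cons_formPerm_eq_swap_mul h.nodup h.mem y
  have hmem : ∀ {w}, w ∈ l' ↔ w = y ∨ w ∈ l := hperm.mem_iff.trans List.mem_cons
  have hnodup : l'.Nodup := hperm.nodup_iff.2 (List.nodup_cons.2 ⟨hy, h.nodup⟩)
  have hmul : swap y x * α * β = l'.formPerm := by rw [mul_assoc, h.mul_eq, hl']
  have hleft : ∀ w ∉ l', (swap y x * α) w = w := fun w hw => by
    obtain ⟨hwy, hwl⟩ := not_or.1 (mt hmem.2 hw)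
    rw [Perm.mul_apply, h.left_apply w hwl, swap_apply_of_ne_of_ne hwy (h.ne_of_notMem hwl).symm]
  have hright : ∀ w ∉ l', β w = w := fun w hw => h.right_apply w fun hwl => hw (hmem.2 (.inr hwl))
  have hαy : HasCycleTypeAt (swap y x * α) y (a + 1) A :=
    h.left_at.swap_mul (h.left_apply y hy) (h.ne_of_notMem hy)
  have hαx : HasCycleTypeAt (swap y x * α) x (a + 1) A := by
    simpa [h.left_apply y hy] using hαy.map_apply
  exact ⟨l', hperm.length_eq,
    ⟨hnodup, hmem.2 (.inr h.mem), hmul, hleft, hright, hαx, h.right_at.one_cons⟩,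
    ⟨hnodup, hmem.2 (.inl rfl), hmul, hleft, hright, hαy,
      .of_apply_eq_self (h.right_apply y hy) h.right_at.cycleType⟩⟩

end IsPlaneTree

/-- Some plane tree with `m` edges in `Ω` has vertex degrees `a ::ₘ A` and `b ::ₘ B`, with an edge
joining the distinguished vertices of degrees `a` and `b`. -/
def ExistsPlaneTree (Ω : Type*) [Fintype Ω] [DecidableEq Ω] (m a : ℕ) (A : Multiset ℕ) (b : ℕ)
    (B : Multiset ℕ) : Prop :=
  ∃ (α β : Perm Ω) (l : List Ω) (x : Ω), l.length = m ∧ IsPlaneTree α β l x a A b B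

namespace ExistsPlaneTree

variable {m a b : ℕ} {A B : Multiset ℕ}

theorem symm (h : ExistsPlaneTree Ω m a A b B) : ExistsPlaneTree Ω m b B a A := by
  obtain ⟨α, β, l, x, rfl, ht⟩ := h
  exact ⟨β⁻¹, α⁻¹, l.reverse, x, List.length_reverse, ht.symm⟩

theorem attach_leaf (h : ExistsPlaneTree Ω m a A b B) (hm : m < Fintype.card Ω) :
    ExistsPlaneTree Ω (m + 1) (a + 1) A b (1 ::ₘ B) ∧
      ExistsPlaneTree Ω (m + 1) (a + 1) A 1 (b ::ₘ B) := by
  obtain ⟨α, β, l, x, rfl, ht⟩ := h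
  obtain ⟨y, hy⟩ : ∃ y, y ∉ l := by
    by_contra! hall
    have huniv : l.toFinset = Finset.univ := Finset.eq_univ_iff_forall.2 (by simpa using hall)
    rw [← Finset.card_univ, ← huniv] at hm
    exact hm.not_ge l.toFinset_card_le
  obtain ⟨l', hlen, hx, hy⟩ := ht.exists_attach_leaf hy
  exact ⟨⟨_, _, l', x, hlen, hx⟩, ⟨_, _, l', y, hlen, hy⟩⟩

end ExistsPlaneTree

theorem exists_leaf {m a b : ℕ} {A B : Multiset ℕ} (hA : IsPartitionOf m (a ::ₘ A))
    (hB : IsPartitionOf m (b ::ₘ B)) (hcard : A.card + B.card + 1 = m) (hab : 2 ≤ a ∨ 2 ≤ b) :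
    (2 ≤ a ∧ 1 ∈ b ::ₘ B) ∨ (2 ≤ b ∧ 1 ∈ a ::ₘ A) := by
  have hone : 1 ∈ a ::ₘ A ∨ 1 ∈ b ::ₘ B := by
    by_contra! hnot
    have hA' := mt hA.one_mem hnot.1
    have hB' := mt hB.one_mem hnot.2
    simp only [Multiset.card_cons] at hA' hB'
    omega
  have ha := hA.1 a (Multiset.mem_cons_self a A)
  have hb := hB.1 b (Multiset.mem_cons_self b B)
  rcases hone with hA1 | hB1
  · by_cases hb2 : 2 ≤ b
    · exact .inr ⟨hb2, hA1⟩
    · obtain rfl : b = 1 := by omega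
      exact .inl ⟨by omega, Multiset.mem_cons_self 1 B⟩
  · by_cases ha2 : 2 ≤ a
    · exact .inl ⟨ha2, hB1⟩
    · obtain rfl : a = 1 := by omega
      exact .inr ⟨by omega, Multiset.mem_cons_self 1 A⟩

theorem exists_neighbour_of_leaf {m a : ℕ} {A B : Multiset ℕ} (hA : IsPartitionOf m (a ::ₘ A))
    (hB : IsPartitionOf m B) (hcard : A.card + B.card = m) :
    ∃ b ∈ B, 2 ≤ a ∨ 2 ≤ b ∨ m = 1 := by
  by_cases hones : B = Multiset.replicate m 1
  · have hA0 : A = 0 := Multiset.card_eq_zero.1 (by simpa [hones] using hcard)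
    have ham : a = m := by simpa [hA0] using hA.2
    have ha : 0 < a := hA.1 a (Multiset.mem_cons_self a A)
    exact ⟨1, hones ▸ Multiset.mem_replicate.2 ⟨by omega, rfl⟩, by omega⟩
  · obtain ⟨b, hb, hb1⟩ := hB.exists_one_lt hones
    exact ⟨b, hb, .inr (.inl hb1)⟩

theorem existsPlaneTree {m a b : ℕ} {A B : Multiset ℕ} (hm : m ≤ Fintype.card Ω)
    (hA : IsPartitionOf m (a ::ₘ A)) (hB : IsPartitionOf m (b ::ₘ B))
    (hcard : A.card + B.card + 1 = m) (hab : 2 ≤ a ∨ 2 ≤ b ∨ m = 1) :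
    ExistsPlaneTree Ω m a A b B := by
  induction m generalizing a b A B with
  | zero => omega
  | succ m ih =>
    rcases Nat.eq_zero_or_pos m with rfl | hm0
    · obtain ⟨hA0, hB0⟩ : A = 0 ∧ B = 0 := by simpa using hcard
      subst hA0 hB0
      obtain rfl : a = 1 := by simpa using hA.2
      obtain rfl : b = 1 := by simpa using hB.2
      obtain ⟨x⟩ := Fintype.card_pos_iff.1 hm
      exact ⟨1, 1, [x], x, rfl, .singleton x⟩
    wlog hleaf : 2 ≤ a ∧ 1 ∈ b ::ₘ B generalizing a b A B
    · have hleaf' := (exists_leaf hA hB hcard (by omega)).resolve_left hleaf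
      exact (this hB hA (by omega) (by omega) hleaf').symm
    obtain ⟨ha, hB1⟩ := hleaf
    obtain ⟨a, rfl⟩ := Nat.exists_eq_add_of_le' (one_le_two.trans ha)
    have hA' : IsPartitionOf m (a ::ₘ A) := (IsPartitionOf.succ_cons_iff (by omega)).1 hA
    by_cases hb : b = 1
    · subst hb
      have hB' : IsPartitionOf m B := IsPartitionOf.one_cons_iff.1 hB
      obtain ⟨c, hc, hac⟩ := exists_neighbour_of_leaf hA' hB' (by omega)
      obtain ⟨B, rfl⟩ := Multiset.exists_cons_of_mem hc
      rw [Multiset.card_cons] at hcard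
      exact ((ih (by omega) hA' hB' (by omega) hac).attach_leaf hm).2
    · obtain ⟨B, rfl⟩ := Multiset.exists_cons_of_mem ((Multiset.mem_cons.1 hB1).resolve_left
        (Ne.symm hb))
      rw [Multiset.cons_swap, IsPartitionOf.one_cons_iff] at hB
      have hb0 : 0 < b := hB.1 b (Multiset.mem_cons_self b B)
      rw [Multiset.card_cons] at hcard
      exact ((ih (by omega) hA' hB (by omega) (by omega)).attach_leaf hm).1

end PlaneTree

section Realization

theorem subgroupTransitive_of_forall_exists {Ω : Type*} {G : Subgroup (Perm Ω)} (x : Ω)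
    (hG : ∀ y, ∃ g ∈ G, g y = x) : SubgroupTransitive G := fun y z => by
  obtain ⟨g, hg, hgy⟩ := hG y
  obtain ⟨h, hh, hhz⟩ := hG z
  exact ⟨h⁻¹ * g, G.mul_mem (G.inv_mem hh) hg, by
    rw [Perm.mul_apply, hgy, Perm.inv_eq_iff_eq, hhz]⟩

theorem exists_notMem_pair {Ω : Type*} [Fintype Ω] {l : List Ω} (hl : l.Nodup)
    (hΩ : Fintype.card Ω = l.length + 2) :
    ∃ y z, y ∉ l ∧ z ∉ l ∧ ∀ w ∉ l, w = y ∨ w = z := by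
  classical
  have hcompl : l.toFinsetᶜ.card = 2 := by
    rw [Finset.card_compl, List.toFinset_card_of_nodup hl, hΩ, add_tsub_cancel_left]
  obtain ⟨y, z, -, hyz⟩ := Finset.card_eq_two.1 hcompl
  have hmem : ∀ w, w ∉ l ↔ w = y ∨ w = z := by
    simpa using Finset.ext_iff.1 hyz
  exact ⟨y, z, (hmem y).2 (.inl rfl), (hmem z).2 (.inr rfl), fun w => (hmem w).1⟩

variable {Ω : Type*} [DecidableEq Ω]

theorem formPerm_pow_mul_swap_sq {l : List Ω} (hl : l.Nodup) {k : ℕ} (hk : l.length = 2 * k + 1)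
    {y z : Ω} (hy : y ∉ l) (hz : z ∉ l) :
    (l.formPerm ^ (k + 1) * swap y z) ^ 2 = l.formPerm := by
  have hdisj : Disjoint l.formPerm (swap y z) := disjoint_formPerm_of_forall_mem fun w hw =>
    swap_apply_of_ne_of_ne (ne_of_mem_of_not_mem hw hy) (ne_of_mem_of_not_mem hw hz)
  rw [(hdisj.commute.pow_left (k + 1)).mul_pow, pow_two (swap y z), swap_mul_self, mul_one,
    ← pow_mul, show (k + 1) * 2 = l.length + 1 by omega, pow_succ,
    List.formPerm_pow_length_eq_one_of_nodup l hl, one_mul]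

variable [Fintype Ω]

namespace IsPlaneTree

variable {α β : Perm Ω} {l : List Ω} {x y z : Ω} {a b : ℕ} {A B : Multiset ℕ}

theorem fullCycleType_mul_swap (h : IsPlaneTree α β l x a A b B) (hy : y ∉ l)
    (hA : IsPartitionOf (Fintype.card Ω) (1 ::ₘ (a + 1) ::ₘ A)) :
    fullCycleType (α * swap y x) = 1 ::ₘ (a + 1) ::ₘ A := by
  refine fullCycleType_eq_of_cycleType_eq_filter hA ?_
  rw [Multiset.cons_swap]
  exact (h.left_at.mul_swap (h.left_apply y hy) (h.ne_of_notMem hy)).one_cons.cycleType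

theorem fullCycleType_swap_mul (h : IsPlaneTree α β l x a A b B) (hy : y ∉ l)
    (hB : IsPartitionOf (Fintype.card Ω) (1 ::ₘ (b + 1) ::ₘ B)) :
    fullCycleType (swap y x * β) = 1 ::ₘ (b + 1) ::ₘ B := by
  refine fullCycleType_eq_of_cycleType_eq_filter hB ?_
  rw [Multiset.cons_swap]
  exact (h.right_at.swap_mul (h.right_apply y hy) (h.ne_of_notMem hy)).one_cons.cycleType

theorem fullCycleType_mul (h : IsPlaneTree α β l x a A b B)
    (hΩ : Fintype.card Ω = l.length + 2) : fullCycleType (α * β) = {l.length, 1, 1} := by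
  have hpos : 0 < l.length := List.length_pos_of_mem h.mem
  have hpart : IsPartitionOf (Fintype.card Ω) {l.length, 1, 1} := by
    simpa [IsPartitionOf, hΩ] using hpos
  refine fullCycleType_eq_of_cycleType_eq_filter hpart ?_
  rw [h.mul_eq, cycleType_formPerm_eq_filter h.nodup]
  simp [← Multiset.cons_zero, Multiset.filter_cons]

theorem subgroupTransitive (h : IsPlaneTree α β l x a A b B) (hy : y ∉ l)
    (hyz : ∀ w ∉ l, w = y ∨ w = z) {G : Subgroup (Perm Ω)} (hαβ : α * β ∈ G)
    (hβ : swap y x * β ∈ G) {ω : Perm Ω} (hω : ω ∈ G) (hωz : ω z = y) :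
    SubgroupTransitive G := by
  have hβy : (swap y x * β) y = x := by
    rw [Perm.mul_apply, h.right_apply y hy, swap_apply_left]
  refine subgroupTransitive_of_forall_exists x fun w => ?_
  by_cases hw : w ∈ l
  · obtain ⟨i, hi⟩ := h.nodup.isCycleOn_formPerm.2 hw h.mem
    exact ⟨(α * β) ^ i, G.zpow_mem hαβ i, h.mul_eq ▸ hi⟩
  · rcases hyz w hw with rfl | rfl
    · exact ⟨_, hβ, hβy⟩
    · exact ⟨_, G.mul_mem hβ hω, by rw [Perm.mul_apply, hωz, hβy]⟩

end IsPlaneTree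

theorem exists_fullCycleType_mul_eq_and_sq_eq {m a b : ℕ} {A B : Multiset ℕ} (hm : Odd m)
    (hΩ : Fintype.card Ω = m + 2) (hA : IsPartitionOf m (a ::ₘ A))
    (hB : IsPartitionOf m (b ::ₘ B)) (hcard : A.card + B.card + 1 = m)
    (hab : 2 ≤ a ∨ 2 ≤ b ∨ m = 1) :
    ∃ α β : Perm Ω, fullCycleType α = 1 ::ₘ (a + 1) ::ₘ A ∧
      fullCycleType β = 1 ::ₘ (b + 1) ::ₘ B ∧ fullCycleType (α * β) = {m, 1, 1} ∧
      ∃ ω : Perm Ω, ω ^ 2 = α * β ∧ SubgroupTransitive (Subgroup.closure {α, β, ω}) := by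
  have ha : 0 < a := hA.1 a (Multiset.mem_cons_self a A)
  have hb : 0 < b := hB.1 b (Multiset.mem_cons_self b B)
  have hAΩ : IsPartitionOf (Fintype.card Ω) (1 ::ₘ (a + 1) ::ₘ A) :=
    hΩ ▸ IsPartitionOf.one_cons_iff.2 ((IsPartitionOf.succ_cons_iff ha).2 hA)
  have hBΩ : IsPartitionOf (Fintype.card Ω) (1 ::ₘ (b + 1) ::ₘ B) :=
    hΩ ▸ IsPartitionOf.one_cons_iff.2 ((IsPartitionOf.succ_cons_iff hb).2 hB)
  obtain ⟨α, β, l, x, rfl, ht⟩ :=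
    existsPlaneTree (Ω := Ω) (hΩ ▸ Nat.le_add_right m 2) hA hB hcard hab
  obtain ⟨y, z, hy, hz, hyz⟩ := exists_notMem_pair ht.nodup hΩ
  obtain ⟨k, hk⟩ := hm
  have hmul : α * swap y x * (swap y x * β) = α * β := by
    rw [mul_assoc, swap_mul_self_mul]
  set ω : Perm Ω := l.formPerm ^ (k + 1) * swap y z
  have hω : ω z = y := by
    rw [Perm.mul_apply, swap_apply_right]
    exact pow_apply_eq_self_of_apply_eq_self (List.formPerm_apply_of_notMem hy) _
  refine ⟨α * swap y x, swap y x * β, ht.fullCycleType_mul_swap hy hAΩ,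
    ht.fullCycleType_swap_mul hy hBΩ, ?_, ω, ?_, ?_⟩
  · rw [hmul, ht.fullCycleType_mul hΩ]
  · rw [hmul, ht.mul_eq, formPerm_pow_mul_swap_sq ht.nodup hk hy hz]
  · have hmem : ∀ σ ∈ ({α * swap y x, swap y x * β, ω} : Set (Perm Ω)),
        σ ∈ Subgroup.closure {α * swap y x, swap y x * β, ω} := fun σ hσ =>
      Subgroup.subset_closure hσ
    refine ht.subgroupTransitive hy hyz ?_ (hmem _ (by simp)) (hmem ω (by simp)) hω
    exact hmul ▸ Subgroup.mul_mem _ (hmem _ (by simp)) (hmem _ (by simp))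

end Realization

/-- If `D₁` has a part equal to 1, then `D₁` has a part `x > 2`, and there are
`α ∈ D₁`, `β ∈ D₂` with `αβ` of cycle type `[d−2, 1, 1]`, and an `ω` with `ω² = αβ` such
that `⟨α, β, ω⟩` is transitive. -/
theorem statement_5 {Ω : Type*} [Fintype Ω] [DecidableEq Ω] (d : ℕ)
    (hcard : Fintype.card Ω = d) (hd : Odd d) (hdpos : 0 < d)
    (D₁ D₂ : Multiset ℕ) (hP1 : IsPartitionOf d D₁) (hP2 : IsPartitionOf d D₂)
    (hnt1 : D₁ ≠ {d} ∧ D₁ ≠ Multiset.replicate d 1)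
    (hnt2 : D₂ ≠ {d} ∧ D₂ ≠ Multiset.replicate d 1)
    (hsum : nu D₁ + nu D₂ = d - 1) (hord : nu D₂ ≤ nu D₁)
    (hne : D₁ ≠ twosAndOne d)
    (h1 : (1 : ℕ) ∈ D₁) :
    (∃ x ∈ D₁, 2 < x) ∧
    ∃ α β : Equiv.Perm Ω, fullCycleType α = D₁ ∧ fullCycleType β = D₂ ∧
      fullCycleType (α * β) = ({d - 2, 1, 1} : Multiset ℕ) ∧
      ∃ ω : Equiv.Perm Ω, ω ^ 2 = α * β ∧
        SubgroupTransitive (Subgroup.closure {α, β, ω}) := by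
  have hc₁ := hP1.nu_add_card
  have hc₂ := hP2.nu_add_card
  obtain ⟨p, hp, hp2⟩ : ∃ x ∈ D₁, 2 < x := hP1.exists_two_lt h1 (by omega) hne
  refine ⟨⟨p, hp, hp2⟩, ?_⟩
  obtain ⟨q, hq, hq1⟩ : ∃ x ∈ D₂, 1 < x := hP2.exists_one_lt hnt2.2
  obtain ⟨A, rfl⟩ := exists_eq_cons_cons h1 hp (by omega)
  obtain ⟨B, rfl⟩ := exists_eq_cons_cons (hP2.one_mem (by omega)) hq (by omega)
  obtain ⟨a, rfl⟩ : ∃ a, p = a + 1 := Nat.exists_eq_add_of_le' (by omega)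
  obtain ⟨b, rfl⟩ : ∃ b, q = b + 1 := Nat.exists_eq_add_of_le' (by omega)
  simp only [Multiset.card_cons] at hc₁ hc₂
  obtain ⟨m, rfl⟩ : ∃ m, d = m + 2 := Nat.exists_eq_add_of_le' (by omega)
  rw [IsPartitionOf.one_cons_iff, IsPartitionOf.succ_cons_iff (by omega)] at hP1 hP2
  exact exists_fullCycleType_mul_eq_and_sq_eq (by simpa [Nat.odd_add] using hd) hcard hP1 hP2
    (by omega) (by omega)
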